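/- Let W^e ⊂ 𝕋² be a nonempty open set and let K₁, K₂ ∈ L¹(𝕋²) ∩ C^∞(𝕋²\{0}). Suppose that for all φ₁, φ₂ ∈ C_c^∞(W^e) and all φ ∈ C_c^∞(W^e), ∫_{W^e} [ (K₁−K₂)∗φ₁ · (−∂₂φ₂ ∂₁φ + ∂₁φ₂ ∂₂φ) + (K₁−K₂)∗φ₂ · (−∂₂φ₁ ∂₁φ + ∂₁φ₁ ∂₂φ) ] dx = 0. Then ∂₁(K₁−K₂)(x−y) = ∂₂(K₁−K₂)(x−y) = 0 for all x, y ∈ W^e with x ≠ y, and consequently ℛ₁g = ℛ₂g on W^e for every g ∈ C_c^∞(W^e). -/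

import Mathlib

/- Common setup: the 2-torus `𝕋² = ℝ²/ℤ²` is modeled by `ℤ²`-periodic functions on
`Pt = ℝ × ℝ`, integrated over the fundamental domain `cube = (0,1] × (0,1]`.
Sobolev spaces and the fractional Laplacian are defined via Fourier coefficients. -/

noncomputable section

open MeasureTheory Filter Set

/-- Points of `ℝ²`. -/
abbrev Pt := ℝ × ℝ

/-- Fundamental domain of the torus `𝕋² = ℝ²/ℤ²`. -/
def cube : Set Pt := Set.Ioc (0:ℝ) 1 ×ˢ Set.Ioc (0:ℝ) 1

/-- A function on `ℝ²` represents a function on the torus iff it is `ℤ²`-periodic. -/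
def Periodic2 (f : Pt → ℂ) : Prop :=
  ∀ x : Pt, ∀ m : ℤ × ℤ, f (x.1 + (m.1 : ℝ), x.2 + (m.2 : ℝ)) = f x

/-- A subset of `ℝ²` represents a subset of the torus iff it is `ℤ²`-translation invariant. -/
def PeriodicSet (W : Set Pt) : Prop :=
  ∀ x ∈ W, ∀ m : ℤ × ℤ, (x.1 + (m.1 : ℝ), x.2 + (m.2 : ℝ)) ∈ W

/-- `k · x` for a frequency `k ∈ ℤ²` and a point `x ∈ ℝ²`. -/
def kdot (k : ℤ × ℤ) (x : Pt) : ℝ := (k.1 : ℝ) * x.1 + (k.2 : ℝ) * x.2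

/-- The Fourier coefficient `f̂(k) = ∫_{𝕋²} f(x) e^{-2πik·x} dx`. -/
def fcoeff (f : Pt → ℂ) (k : ℤ × ℤ) : ℂ :=
  ∫ x in cube, f x * Complex.exp (-(2 * Real.pi * Complex.I) * (kdot k x : ℂ))

/-- `|k|²` for `k ∈ ℤ²`. -/
def ksq (k : ℤ × ℤ) : ℝ := (k.1 : ℝ) ^ 2 + (k.2 : ℝ) ^ 2

/-- The squared Sobolev norm `‖f‖²_{H^r} = Σ_k (1+|k|²)^r |f̂(k)|²`. -/
def sobNormSq (r : ℝ) (f : Pt → ℂ) : ℝ :=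
  ∑' k : ℤ × ℤ, (1 + ksq k) ^ r * ‖fcoeff f k‖ ^ 2

/-- The Sobolev norm `‖f‖_{H^r}`. -/
def sobNorm (r : ℝ) (f : Pt → ℂ) : ℝ := Real.sqrt (sobNormSq r f)

/-- Membership `f ∈ H^r(𝕋²)`: square-summability of the weighted Fourier coefficients. -/
def MemH (r : ℝ) (f : Pt → ℂ) : Prop :=
  Summable fun k : ℤ × ℤ => (1 + ksq k) ^ r * ‖fcoeff f k‖ ^ 2

/-- The fractional Laplacian `(-Δ)^r f(x) = Σ_k |2πk|^{2r} f̂(k) e^{2πik·x}`. -/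
def fracLap (r : ℝ) (f : Pt → ℂ) (x : Pt) : ℂ :=
  ∑' k : ℤ × ℤ, ((4 * Real.pi ^ 2 * ksq k) ^ r : ℝ) * fcoeff f k *
    Complex.exp ((2 * Real.pi * Complex.I) * (kdot k x : ℂ))

/-- The `L^p(𝕋²)` norm. -/
def lpNorm (p : ℝ) (f : Pt → ℂ) : ℝ := (∫ x in cube, ‖f x‖ ^ p) ^ (1 / p)

/-- Membership in `L^p(𝕋²)` (for `p < ∞`). -/
def MemLq (p : ℝ) (f : Pt → ℂ) : Prop := IntegrableOn (fun x => ‖f x‖ ^ p) cube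

/-- First spatial partial derivative. -/
def pd1 (f : Pt → ℂ) (x : Pt) : ℂ := fderiv ℝ f x (1, 0)

/-- Second spatial partial derivative. -/
def pd2 (f : Pt → ℂ) (x : Pt) : ℂ := fderiv ℝ f x (0, 1)

/-- Periodic convolution `(K ∗ θ)(x) = ∫_{𝕋²} K(x-y) θ(y) dy` with a real kernel `K`. -/
def conv (K : Pt → ℝ) (θ : Pt → ℂ) (x : Pt) : ℂ :=
  ∫ y in cube, (K (x.1 - y.1, x.2 - y.2) : ℂ) * θ y

/-- The divergence-free drift `ℛθ = (-∂₂(K∗θ), ∂₁(K∗θ))`. -/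
def drift (K : Pt → ℝ) (θ : Pt → ℂ) (x : Pt) : ℂ × ℂ :=
  (-(pd2 (conv K θ) x), pd1 (conv K θ) x)

/-- The transport term `ℛθ · ∇θ`. -/
def nonlinTerm (K : Pt → ℝ) (θ : Pt → ℂ) (x : Pt) : ℂ :=
  (drift K θ x).1 * pd1 θ x + (drift K θ x).2 * pd2 θ x

/-- The cross transport term `ℛw₁ · ∇w₂ + ℛw₂ · ∇w₁`. -/
def crossTerm (K : Pt → ℝ) (w₁ w₂ : Pt → ℂ) (x : Pt) : ℂ :=
  (drift K w₁ x).1 * pd1 w₂ x + (drift K w₁ x).2 * pd2 w₂ x +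
  (drift K w₂ x).1 * pd1 w₁ x + (drift K w₂ x).2 * pd2 w₁ x

/-- The structural assumptions (Ass1)–(Ass3) on the kernel `K` of the multiplier `𝒦`:
`K ∈ L¹(𝕋²) ∩ C^∞(𝕋²\{0})`, Fourier coefficients comparable to `|k|⁻¹`,
and `L^p`-boundedness of the drift `ℛ` for all `p ∈ (1,∞)`. -/
structure KernelAssumptions (K : Pt → ℝ) : Prop where
  periodic : ∀ x : Pt, ∀ m : ℤ × ℤ, K (x.1 + (m.1 : ℝ), x.2 + (m.2 : ℝ)) = K x
  integrable : IntegrableOn K cube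
  smooth : ∀ x : Pt, (¬ ∃ m : ℤ × ℤ, x = ((m.1 : ℝ), (m.2 : ℝ))) → ContDiffAt ℝ (⊤ : ℕ∞) K x
  fourier_bounds : ∃ c C : ℝ, 0 < c ∧ 0 < C ∧ ∀ k : ℤ × ℤ, k ≠ 0 →
    (fcoeff (fun x => (K x : ℂ)) k).im = 0 ∧
    c * (Real.sqrt (ksq k))⁻¹ ≤ (fcoeff (fun x => (K x : ℂ)) k).re ∧
    (fcoeff (fun x => (K x : ℂ)) k).re ≤ C * (Real.sqrt (ksq k))⁻¹
  lp_bounded : ∀ p : ℝ, 1 < p → ∃ Cp : ℝ, ∀ θ : Pt → ℂ, Periodic2 θ → MemLq p θ →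
    lpNorm p (fun x => ‖drift K θ x‖) ≤ Cp * lpNorm p θ

/-- `θ` is a solution of the active scalar equation
`∂_t θ + ℛθ·∇θ + (-Δ)^α θ = f` on `𝕋² × (0,T)` with `θ(0) = 0`. -/
structure IsSolASE (K : Pt → ℝ) (α T : ℝ) (f θ : ℝ → Pt → ℂ) : Prop where
  init : ∀ x : Pt, θ 0 x = 0
  periodic : ∀ t : ℝ, Periodic2 (θ t)
  eq : ∀ t ∈ Set.Ioo 0 T, ∀ x : Pt,
    deriv (fun s => θ s x) t + nonlinTerm K (θ t) x + fracLap α (θ t) x = f t x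

/-- `u` is a solution of the linear fractional diffusion equation
`∂_t u + (-Δ)^α u = f` on `𝕋² × (0,T)` with `u(0) = 0`. -/
structure IsSolLin (α T : ℝ) (f u : ℝ → Pt → ℂ) : Prop where
  init : ∀ x : Pt, u 0 x = 0
  periodic : ∀ t : ℝ, Periodic2 (u t)
  eq : ∀ t ∈ Set.Ioo 0 T, ∀ x : Pt,
    deriv (fun s => u s x) t + fracLap α (u t) x = f t x

/-- `f ∈ C_c^∞(W × (0,T))`: jointly smooth, periodic in space, spatially supported in a
closed subset of `W` and temporally compactly supported in `(0,T)`. -/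
structure TestFun (W : Set Pt) (T : ℝ) (f : ℝ → Pt → ℂ) : Prop where
  smooth : ContDiff ℝ (⊤ : ℕ∞) (fun p : ℝ × Pt => f p.1 p.2)
  periodic : ∀ t : ℝ, Periodic2 (f t)
  supp_space : ∃ F : Set Pt, IsClosed F ∧ F ⊆ W ∧ ∀ t : ℝ, ∀ x ∉ F, f t x = 0
  supp_time : ∃ a b : ℝ, 0 < a ∧ a ≤ b ∧ b < T ∧ ∀ t ∉ Set.Icc a b, ∀ x : Pt, f t x = 0

/-- `g ∈ C_c^∞(U)` for an (open) subset `U` of the torus. -/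
structure TestFunSp (U : Set Pt) (g : Pt → ℂ) : Prop where
  smooth : ContDiff ℝ (⊤ : ℕ∞) g
  periodic : Periodic2 g
  supp : ∃ F : Set Pt, IsClosed F ∧ F ⊆ U ∧ ∀ x ∉ F, g x = 0

/-- `θ ∈ L^∞(0,T; H^s(𝕋²))`. -/
def MemLinfH (T s : ℝ) (θ : ℝ → Pt → ℂ) : Prop :=
  (∀ t ∈ Set.Icc 0 T, MemH s (θ t)) ∧
  BddAbove ((fun t : ℝ => sobNorm s (θ t)) '' Set.Icc 0 T)

/-- The `L^∞(0,T; H^s(𝕋²))` norm. -/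
def linfHNorm (T s : ℝ) (θ : ℝ → Pt → ℂ) : ℝ :=
  ⨆ t : Set.Icc (0:ℝ) T, sobNorm s (θ t)

/-- `θ ∈ L²(0,T; H^s(𝕋²))`. -/
def MemL2H (T s : ℝ) (θ : ℝ → Pt → ℂ) : Prop :=
  (∀ t ∈ Set.Ioc 0 T, MemH s (θ t)) ∧
  IntegrableOn (fun t => sobNormSq s (θ t)) (Set.Ioc 0 T)

/-- The `L²(0,T; H^s(𝕋²))` norm. -/
def l2HNorm (T s : ℝ) (θ : ℝ → Pt → ℂ) : ℝ :=
  Real.sqrt (∫ t in Set.Ioc 0 T, sobNormSq s (θ t))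

/-- `θ ∈ L^∞(0,T; L^q(𝕋²))`. -/
def MemLinfLq (T q : ℝ) (θ : ℝ → Pt → ℂ) : Prop :=
  (∀ t ∈ Set.Icc 0 T, MemLq q (θ t)) ∧
  BddAbove ((fun t : ℝ => lpNorm q (θ t)) '' Set.Icc 0 T)

/-- `f ∈ L¹(0,T; L^q(𝕋²))`. -/
def MemL1Lq (T q : ℝ) (f : ℝ → Pt → ℂ) : Prop :=
  (∀ t ∈ Set.Ioc 0 T, MemLq q (f t)) ∧
  IntegrableOn (fun t => lpNorm q (f t)) (Set.Ioc 0 T)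

/-- `f ∈ L²(0,T; L²(𝕋²))`. -/
def MemL2L2 (T : ℝ) (f : ℝ → Pt → ℂ) : Prop :=
  (∀ t ∈ Set.Ioc 0 T, MemLq 2 (f t)) ∧
  IntegrableOn (fun t => ∫ x in cube, ‖f t x‖ ^ 2) (Set.Ioc 0 T)

/-- The `L²(0,T; L²(𝕋²))` norm. -/
def l2L2Norm (T : ℝ) (f : ℝ → Pt → ℂ) : ℝ :=
  Real.sqrt (∫ t in Set.Ioc 0 T, ∫ x in cube, ‖f t x‖ ^ 2)

/-- `u ∈ C([0,T]; L²(𝕋²))`: continuity in time w.r.t. the `L²(𝕋²)` norm. -/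
def ContL2 (T : ℝ) (u : ℝ → Pt → ℂ) : Prop :=
  ∀ t ∈ Set.Icc 0 T, (∀ s ∈ Set.Icc 0 T, MemLq 2 (fun x => u s x - u t x)) ∧
    Tendsto (fun s => lpNorm 2 (fun x => u s x - u t x))
      (nhdsWithin t (Set.Icc 0 T)) (nhds 0)

/-- The `C([0,T]; L²(𝕋²))` (sup-in-time of the `L²` norm) norm. -/
def cL2Norm (T : ℝ) (u : ℝ → Pt → ℂ) : ℝ :=
  ⨆ t : Set.Icc (0:ℝ) T, lpNorm 2 (u t)

end

open MeasureTheory Filter Set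

/-! Write `L = K₁ - K₂`. Take `φ₁ = u` concentrated near `y₀ ∈ W` and `φ` supported near `x₀ ∈ W`.
If `x₀ - y₀` is not a lattice point, these supports can be kept disjoint on the torus, and the second
term of the identity vanishes. Choosing `φ₂` equal to a linear function near the support of `φ`
turns the first term into `∫ (L ∗ u) ∂ₑφ` with an arbitrary direction `e`, so `L ∗ u` is constant
near `x₀`. Letting `u` tend to the Dirac mass at `y₀` shows that `L` is constant near `x₀ - y₀`.

For the drifts, a planar disc stays connected after removing the countable lattice. Hence for
`y ∈ W` the function `L (· - y)` is constant off the lattice on a disc around `x` whose radius does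
not depend on `y`, so `L ∗ g` is constant near `x`. -/

open scoped Topology Pointwise Convolution ContDiff

section Analysis

lemma ofReal_comp_sub_convolution {A : Type*} [AddGroup A] [MeasurableSpace A]
    [MeasurableAdd A] {μ : Measure A} [μ.IsAddRightInvariant] (ρ L : A → ℝ) (a x : A) :
    ((fun y => (ρ (y - a) : ℂ)) ⋆[ContinuousLinearMap.mul ℝ ℂ, μ] fun z => (L z : ℂ)) x =
      ((ρ ⋆[ContinuousLinearMap.lsmul ℝ ℝ, μ] L) (x - a) : ℂ) := by
  simp only [convolution_def, ContinuousLinearMap.mul_apply', ContinuousLinearMap.lsmul_apply,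
    smul_eq_mul, ← integral_complex_ofReal, Complex.ofReal_mul]
  rw [← integral_sub_right_eq_self (fun t => (ρ t : ℂ) * (L (x - a - t) : ℂ)) a]
  simp only [sub_sub_sub_cancel_right]

variable {E F : Type*} [NormedAddCommGroup E] [NormedSpace ℝ E]

lemma isPreconnected_ball_diff_countable (hE : 1 < Module.rank ℝ E) {s : Set E} (hs : s.Countable)
    (c : E) {r : ℝ} (hr : 0 < r) : IsPreconnected (Metric.ball c r \ s) := by
  let e := OpenPartialHomeomorph.univBall c r
  have hsource : e.source = univ := OpenPartialHomeomorph.univBall_source c r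
  have hinj : Function.Injective e := injOn_univ.1 (hsource ▸ e.injOn)
  have hrange : range e = Metric.ball c r := by
    rw [← image_univ, ← hsource, e.image_source_eq_target,
      OpenPartialHomeomorph.univBall_target c hr]
  have himage : e '' (e ⁻¹' s)ᶜ = Metric.ball c r \ s := by
    rw [← preimage_compl, image_preimage_eq_inter_range, hrange, inter_comm, sdiff_eq]
  rw [← himage]
  exact ((hs.preimage hinj).isConnected_compl_of_one_lt_rank hE).isPreconnected.image e
    (OpenPartialHomeomorph.continuous_univBall c r).continuousOn

variable [NormedAddCommGroup F] [NormedSpace ℝ F]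

lemma eq_of_hasFDerivAt_zero_ball_diff_countable (hE : 1 < Module.rank ℝ E) {s : Set E}
    (hsc : IsClosed s) (hs : s.Countable) {f : E → F} {c : E} {r : ℝ}
    (hf : ∀ z ∈ Metric.ball c r \ s, HasFDerivAt (𝕜 := ℝ) f 0 z) {p q : E}
    (hp : p ∈ Metric.ball c r \ s) (hq : q ∈ Metric.ball c r \ s) : f p = f q :=
  (Metric.isOpen_ball.sdiff hsc).is_const_of_fderiv_eq_zero (𝕜 := ℝ)
    (isPreconnected_ball_diff_countable hE hs c (Metric.pos_of_mem_ball hp.1))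
    (fun z hz => (hf z hz).differentiableAt.differentiableWithinAt)
    (fun z hz => (hf z hz).fderiv) hp hq

variable [FiniteDimensional ℝ E] [MeasurableSpace E] [BorelSpace E]
  {μ : Measure E} [μ.IsAddHaarMeasure]
  [CompleteSpace F] {U : Set E} {G : E → F}

lemma fderiv_apply_eq_zero_of_integral_fderiv_smul_eq_zero (hU : IsOpen U) (hG : ContDiff ℝ 1 G)
    (v : E) (h : ∀ φ : E → ℝ, ContDiff ℝ ∞ φ → HasCompactSupport φ → tsupport φ ⊆ U →
      ∫ x, fderiv ℝ φ x v • G x ∂μ = 0) :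
    EqOn (fun x => fderiv ℝ G x v) 0 U := by
  have hdG : Continuous fun x => fderiv ℝ G x v := (hG.continuous_fderiv one_ne_zero).clm_apply
    continuous_const
  have hae : ∀ᵐ x ∂μ, x ∈ U → fderiv ℝ G x v = 0 := by
    refine hU.ae_eq_zero_of_integral_contDiff_smul_eq_zero
      (hdG.locallyIntegrable.locallyIntegrableOn U) fun φ hφ hφc hφU => ?_
    have hdφ : Continuous fun x => fderiv ℝ φ x v :=
      (hφ.continuous_fderiv (by simp)).clm_apply continuous_const
    rw [integral_smul_fderiv_eq_neg_fderiv_smul_of_integrable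
      ((hdφ.smul hG.continuous).integrable_of_hasCompactSupport
        (hφc.fderiv_apply ℝ v).smul_right)
      ((hφ.continuous.smul hdG).integrable_of_hasCompactSupport hφc.smul_right)
      ((hφ.continuous.smul hG.continuous).integrable_of_hasCompactSupport hφc.smul_right)
      (fun x _ => hφ.differentiable (by simp) x)
      (fun x _ => hG.differentiable one_ne_zero x), h φ hφ hφc hφU, neg_zero]
  exact Measure.eqOn_open_of_ae_eq ((ae_restrict_iff' hU.measurableSet).2 hae) hU
    hdG.continuousOn continuousOn_const

lemma eq_of_integral_fderiv_smul_eq_zero (hU : IsOpen U) (hUc : IsPreconnected U)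
    (hG : ContDiff ℝ 1 G)
    (h : ∀ φ : E → ℝ, ContDiff ℝ ∞ φ → HasCompactSupport φ → tsupport φ ⊆ U →
      ∀ v, ∫ x, fderiv ℝ φ x v • G x ∂μ = 0)
    {x y : E} (hx : x ∈ U) (hy : y ∈ U) : G x = G y := by
  refine hU.is_const_of_fderiv_eq_zero (𝕜 := ℝ) hUc
    (hG.differentiable one_ne_zero).differentiableOn (fun z hz => ?_) hx hy
  ext v
  exact fderiv_apply_eq_zero_of_integral_fderiv_smul_eq_zero hU hG v
    (fun φ hφ hφc hφU => h φ hφ hφc hφU v) hz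

lemma eq_of_normed_convolution_eq {L : E → F} (hL : AEStronglyMeasurable L μ) {p q : E}
    (hp : ContinuousAt L p) (hq : ContinuousAt L q) {r : ℝ} (hr : 0 < r)
    (h : ∀ ρ : ContDiffBump (0 : E), ρ.rOut < r →
      (ρ.normed μ ⋆[ContinuousLinearMap.lsmul ℝ ℝ, μ] L) p =
        (ρ.normed μ ⋆[ContinuousLinearMap.lsmul ℝ ℝ, μ] L) q) : L p = L q := by
  obtain ⟨δ, -, hδ, hδ_lim⟩ := exists_seq_strictAnti_tendsto' hr
  let ρ (n : ℕ) : ContDiffBump (0 : E) :=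
    ⟨δ n / 2, δ n, half_pos (hδ n).1, half_lt_self (hδ n).1⟩
  have hlim {z : E} (hz : ContinuousAt L z) :
      Tendsto (fun n => ((ρ n).normed μ ⋆[ContinuousLinearMap.lsmul ℝ ℝ, μ] L) z) atTop
        (𝓝 (L z)) :=
    ContDiffBump.convolution_tendsto_right (g := fun _ => L) hδ_lim (.of_forall fun _ => hL)
      (hz.tendsto.comp tendsto_snd) tendsto_const_nhds
  refine tendsto_nhds_unique (hlim hp) ((hlim hq).congr fun n => ?_)
  exact (h (ρ n) (hδ n).2).symm

end Analysis


section IntegerLattice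

/-- The inclusion `ℤ² → ℝ²`. -/
def latticeEmb : ℤ × ℤ →+ Pt := (Int.castAddHom ℝ).prodMap (Int.castAddHom ℝ)

/-- The lattice `ℤ² ⊂ ℝ²` by which one divides to obtain the torus. -/
def integerLattice : AddSubgroup Pt := latticeEmb.range

lemma latticeEmb_mem (m : ℤ × ℤ) : latticeEmb m ∈ integerLattice := ⟨m, rfl⟩

lemma isClosedEmbedding_latticeEmb : Topology.IsClosedEmbedding latticeEmb :=
  Int.isClosedEmbedding_coe_real.prodMap Int.isClosedEmbedding_coe_real

lemma isClosed_integerLattice : IsClosed (integerLattice : Set Pt) :=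
  isClosedEmbedding_latticeEmb.isClosed_range

lemma countable_integerLattice : (integerLattice : Set Pt).Countable :=
  countable_range latticeEmb

instance : Countable integerLattice := countable_integerLattice

lemma eq_zero_of_norm_latticeEmb_lt_one {m : ℤ × ℤ} (hm : ‖latticeEmb m‖ < 1) : m = 0 := by
  obtain ⟨h₁, h₂⟩ : ‖(m.1 : ℝ)‖ < 1 ∧ ‖(m.2 : ℝ)‖ < 1 := max_lt_iff.1 hm
  rw [Real.norm_eq_abs] at h₁ h₂
  exact Prod.ext (Int.abs_lt_one_iff.1 (mod_cast h₁)) (Int.abs_lt_one_iff.1 (mod_cast h₂))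

/-- The half-open unit square with lower left corner `a`, a period cell of the torus. -/
def unitCell (a : Pt) : Set Pt := Ioc a.1 (a.1 + 1) ×ˢ Ioc a.2 (a.2 + 1)

lemma unitCell_zero : unitCell 0 = cube := by simp [unitCell, cube]

lemma existsUnique_latticeEmb_add_mem_unitCell (a x : Pt) :
    ∃! m : ℤ × ℤ, latticeEmb m + x ∈ unitCell a := by
  obtain ⟨i, hi, hi'⟩ := existsUnique_add_zsmul_mem_Ioc one_pos x.1 a.1
  obtain ⟨j, hj, hj'⟩ := existsUnique_add_zsmul_mem_Ioc one_pos x.2 a.2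
  simp only [zsmul_one, add_comm x.1, add_comm x.2] at hi hi' hj hj'
  exact ⟨(i, j), ⟨hi, hj⟩, fun m hm => Prod.ext (hi' _ hm.1) (hj' _ hm.2)⟩

lemma isAddFundamentalDomain_unitCell (a : Pt) :
    IsAddFundamentalDomain integerLattice (unitCell a) := by
  refine IsAddFundamentalDomain.mk' (measurableSet_Ioc.prod measurableSet_Ioc).nullMeasurableSet
    fun x => ?_
  obtain ⟨m, hm, hm'⟩ := existsUnique_latticeEmb_add_mem_unitCell a x
  refine ⟨⟨latticeEmb m, latticeEmb_mem m⟩, hm, ?_⟩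
  rintro ⟨_, n, rfl⟩ hn
  exact Subtype.ext (congrArg latticeEmb (hm' n hn))

lemma unitCell_ae_eq_ball (c : Pt) :
    unitCell (c - (1 / 2, 1 / 2)) =ᵐ[volume] Metric.ball c (1 / 2) := by
  rw [← ball_prod_same c.1 c.2, Real.ball_eq_Ioo, Real.ball_eq_Ioo]
  have h (t : ℝ) : t - 1 / 2 + 1 = t + 1 / 2 := by ring
  simp only [unitCell, Prod.fst_sub, Prod.snd_sub, h]
  exact Measure.set_prod_ae_eq Ioo_ae_eq_Ioc.symm Ioo_ae_eq_Ioc.symm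

end IntegerLattice

section LatticePeriodic

variable {E : Type*}

/-- Functions on the torus, encoded as `ℤ²`-invariant functions on `ℝ²`. For `E = ℂ` this unfolds
to `Periodic2`. -/
def LatticePeriodic (f : Pt → E) : Prop := ∀ x : Pt, ∀ m : ℤ × ℤ, f (x + latticeEmb m) = f x

namespace LatticePeriodic

variable {f : Pt → E}

lemma vadd_eq (hf : LatticePeriodic f) (γ : integerLattice) (x : Pt) : f (γ +ᵥ x) = f x := by
  obtain ⟨_, m, rfl⟩ := γ
  rw [← hf x m, add_comm]
  rfl

lemma sub_left_comp (hf : LatticePeriodic f) (x : Pt) : LatticePeriodic fun y => f (x - y) :=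
  fun y m => (hf (x - (y + latticeEmb m)) m).symm.trans (congrArg f (by abel))

variable [NormedAddCommGroup E]

lemma fderiv [NormedSpace ℝ E] (hf : LatticePeriodic f) : LatticePeriodic (fderiv ℝ f) := by
  intro x m
  rw [← fderiv_comp_add_right, funext fun y => hf y m]

lemma setIntegral_cube_eq_setIntegral_ball [NormedSpace ℝ E] (hf : LatticePeriodic f) (c : Pt) :
    ∫ x in cube, f x = ∫ x in Metric.ball c (1 / 2), f x := by
  rw [← unitCell_zero, ← setIntegral_congr_set (unitCell_ae_eq_ball c)]
  exact (isAddFundamentalDomain_unitCell 0).setIntegral_eq (isAddFundamentalDomain_unitCell _)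
    hf.vadd_eq

lemma locallyIntegrable (hf : LatticePeriodic f) (hint : IntegrableOn f cube) :
    LocallyIntegrable f := by
  intro c
  refine ⟨Metric.ball c (1 / 2), Metric.ball_mem_nhds c one_half_pos, ?_⟩
  rw [← integrableOn_congr_set_ae (unitCell_ae_eq_ball c)]
  rw [← unitCell_zero] at hint
  exact ((isAddFundamentalDomain_unitCell 0).integrableOn_iff (isAddFundamentalDomain_unitCell _)
    hf.vadd_eq).1 hint

end LatticePeriodic

end LatticePeriodic

section Periodization

variable {E : Type*} [NormedAddCommGroup E] {g : Pt → E}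

/-- The function on the torus induced by a function `g` on `ℝ²`. The sum is a `finsum`, which is
locally finite when `g` has compact support. -/
noncomputable def periodization (g : Pt → E) (x : Pt) : E := ∑ᶠ m : ℤ × ℤ, g (x + latticeEmb m)

lemma latticePeriodic_periodization : LatticePeriodic (periodization g) := by
  intro x m
  simp only [periodization, add_assoc, ← map_add]
  exact finsum_comp_equiv (f := fun n => g (x + latticeEmb n)) (Equiv.addLeft m)

lemma locallyFinite_support_comp_add_latticeEmb (hg : HasCompactSupport g) :
    LocallyFinite fun m => Function.support fun x => g (x + latticeEmb m) := by
  intro x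
  refine ⟨Metric.closedBall x 1, Metric.closedBall_mem_nhds x one_pos, ?_⟩
  have hcompact : IsCompact (latticeEmb ⁻¹' (tsupport g + -Metric.closedBall x 1)) :=
    isClosedEmbedding_latticeEmb.isCompact_preimage
      (IsCompact.add hg (isCompact_closedBall x 1).neg)
  refine hcompact.finite_of_discrete.subset ?_
  rintro m ⟨y, hym, hy⟩
  exact ⟨y + latticeEmb m, subset_tsupport g hym, -y, neg_mem_neg.2 hy, add_neg_cancel_comm _ _⟩

lemma contDiff_periodization [NormedSpace ℝ E] {n : ℕ∞ω} (hg : ContDiff ℝ n g)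
    (hgc : HasCompactSupport g) : ContDiff ℝ n (periodization g) := by
  rw [← contMDiff_iff_contDiff]
  exact contMDiff_finsum
    (fun m => (hg.comp (contDiff_id.add contDiff_const)).contMDiff)
    (locallyFinite_support_comp_add_latticeEmb hgc)

lemma isClosed_tsupport_add_integerLattice (hg : HasCompactSupport g) :
    IsClosed (tsupport g + integerLattice : Set Pt) :=
  isClosed_integerLattice.add_left_of_isCompact hg

lemma tsupport_periodization_subset (hg : HasCompactSupport g) :
    tsupport (periodization g) ⊆ tsupport g + (integerLattice : Set Pt) := by
  refine closure_minimal (fun x hx => ?_) (isClosed_tsupport_add_integerLattice hg)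
  obtain ⟨m, hm⟩ : ∃ m, g (x + latticeEmb m) ≠ 0 := by
    contrapose! hx
    exact Function.notMem_support.2 (finsum_eq_zero_of_forall_eq_zero hx)
  exact ⟨x + latticeEmb m, subset_tsupport g hm, -latticeEmb m,
    neg_mem (latticeEmb_mem m), add_neg_cancel_right _ _⟩

lemma eqOn_periodization_ball {c : Pt} (hg : tsupport g ⊆ Metric.ball c (1 / 2)) :
    EqOn (periodization g) g (Metric.ball c (1 / 2)) := by
  intro x hx
  have hzero (m : ℤ × ℤ) (hm : m ≠ 0) : g (x + latticeEmb m) = 0 := by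
    contrapose! hm
    have hxm : x + latticeEmb m ∈ Metric.ball c (1 / 2) := hg (subset_tsupport g hm)
    refine eq_zero_of_norm_latticeEmb_lt_one ?_
    calc ‖latticeEmb m‖ = dist (x + latticeEmb m) x := by simp [dist_eq_norm]
      _ ≤ dist (x + latticeEmb m) c + dist x c := dist_triangle_right _ _ _
      _ < 1 / 2 + 1 / 2 := add_lt_add hxm hx
      _ = 1 := add_halves 1
  rw [periodization, finsum_eq_single _ 0 hzero, map_zero, add_zero]

lemma periodization_eventuallyEq {c x : Pt} (hg : tsupport g ⊆ Metric.ball c (1 / 2))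
    (hx : x ∈ Metric.ball c (1 / 2)) : periodization g =ᶠ[𝓝 x] g :=
  (eqOn_periodization_ball hg).eventuallyEq_of_mem (Metric.isOpen_ball.mem_nhds hx)

/-- Smooth functions on `ℝ²` supported in `W` and in the open unit square centred at `c` (a ball
for the sup norm), so that periodizing them does not superpose different translates. -/
structure CellTestFun (W : Set Pt) (c : Pt) (u : Pt → ℂ) : Prop where
  contDiff : ContDiff ℝ (⊤ : ℕ∞) u
  tsupport_subset : tsupport u ⊆ W
  tsupport_subset_ball : tsupport u ⊆ Metric.ball c (1 / 2)

namespace CellTestFun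

variable {W : Set Pt} {c : Pt} {u : Pt → ℂ}

lemma hasCompactSupport (hu : CellTestFun W c u) : HasCompactSupport u :=
  Metric.isCompact_of_isClosed_isBounded (isClosed_tsupport u)
    (Metric.isBounded_ball.subset hu.tsupport_subset_ball)

lemma testFunSp_periodization (hW : PeriodicSet W) (hu : CellTestFun W c u) :
    TestFunSp W (periodization u) where
  smooth := contDiff_periodization hu.contDiff hu.hasCompactSupport
  periodic := latticePeriodic_periodization
  supp := by
    refine ⟨tsupport u + (integerLattice : Set Pt),
      isClosed_tsupport_add_integerLattice hu.hasCompactSupport, ?_, fun x hx => ?_⟩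
    · rintro _ ⟨x, hx, _, ⟨m, rfl⟩, rfl⟩
      exact hW x (hu.tsupport_subset hx) m
    · exact image_eq_zero_of_notMem_tsupport
        (mt (tsupport_periodization_subset hu.hasCompactSupport ·) hx)

lemma conv_periodization {L : Pt → ℝ} (hL : LatticePeriodic L) (hu : CellTestFun W c u) :
    conv L (periodization u) = u ⋆[ContinuousLinearMap.mul ℝ ℂ] fun z => (L z : ℂ) := by
  ext x
  have hper : LatticePeriodic fun y => (L (x - y) : ℂ) * periodization u y := fun y m => by
    simp only [latticePeriodic_periodization y m, hL.sub_left_comp x y m]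
  calc ∫ y in cube, (L (x - y) : ℂ) * periodization u y
      = ∫ y in Metric.ball c (1 / 2), (L (x - y) : ℂ) * periodization u y :=
        hper.setIntegral_cube_eq_setIntegral_ball c
    _ = ∫ y in Metric.ball c (1 / 2), (L (x - y) : ℂ) * u y :=
        setIntegral_congr_fun measurableSet_ball fun y hy => by
          simp only [eqOn_periodization_ball hu.tsupport_subset_ball hy]
    _ = ∫ y, (L (x - y) : ℂ) * u y :=
        setIntegral_eq_integral_of_forall_compl_eq_zero fun y hy => by
          rw [image_eq_zero_of_notMem_tsupport (mt (hu.tsupport_subset_ball ·) hy), mul_zero]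
    _ = ∫ y, u y * (L (x - y) : ℂ) := by simp only [mul_comm]

end CellTestFun

end Periodization

section PoissonBracket

/-- The Poisson bracket `∂₁f ∂₂g - ∂₂f ∂₁g`, i.e. `∇^⊥f · ∇g`. -/
noncomputable def poissonBracket (f g : Pt → ℂ) (x : Pt) : ℂ :=
  -(pd2 f x) * pd1 g x + pd1 f x * pd2 g x

/-- The hypothesis on the difference `L` of two kernels: with `{·, ·}` the Poisson bracket, the
integral of `(L ∗ φ₁) {φ₂, φ} + (L ∗ φ₂) {φ₁, φ}` over the torus vanishes for all test functions
supported in `W`. -/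
def BracketIdentity (W : Set Pt) (L : Pt → ℝ) : Prop :=
  ∀ φ₁ φ₂ φ : Pt → ℂ, TestFunSp W φ₁ → TestFunSp W φ₂ → TestFunSp W φ →
    ∫ x in cube, (conv L φ₁ x * poissonBracket φ₂ φ x + conv L φ₂ x * poissonBracket φ₁ φ x) = 0

variable {f f' g g' : Pt → ℂ} {x : Pt}

lemma poissonBracket_congr (hf : f =ᶠ[𝓝 x] f') (hg : g =ᶠ[𝓝 x] g') :
    poissonBracket f g x = poissonBracket f' g' x := by
  simp only [poissonBracket, pd1, pd2, hf.fderiv_eq, hg.fderiv_eq]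

lemma poissonBracket_of_notMem_tsupport_left (hx : x ∉ tsupport f) : poissonBracket f g x = 0 := by
  simp [poissonBracket, pd1, pd2, fderiv_of_notMem_tsupport ℝ hx]

lemma poissonBracket_of_notMem_tsupport_right (hx : x ∉ tsupport g) :
    poissonBracket f g x = 0 := by
  simp [poissonBracket, pd1, pd2, fderiv_of_notMem_tsupport ℝ hx]

lemma latticePeriodic_poissonBracket (hf : LatticePeriodic f) (hg : LatticePeriodic g) :
    LatticePeriodic (poissonBracket f g) := fun x m => by
  simp only [poissonBracket, pd1, pd2, hf.fderiv x m, hg.fderiv x m]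

lemma latticePeriodic_conv {L : Pt → ℝ} (hL : LatticePeriodic L) (θ : Pt → ℂ) :
    LatticePeriodic (conv L θ) := by
  intro x m
  have hshift (y : Pt) : L (x + latticeEmb m - y) = L (x - y) := by
    rw [add_sub_right_comm, hL]
  change ∫ y in cube, (L (x + latticeEmb m - y) : ℂ) * θ y = ∫ y in cube, (L (x - y) : ℂ) * θ y
  simp only [hshift]

variable {W : Set Pt} {L : Pt → ℝ} {x₀ y₀ : Pt} {u ψ φ : Pt → ℂ}

/-- The second term of the identity drops out because the supports of `u` and `φ` remain disjoint
on the torus. -/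
lemma BracketIdentity.integral_convolution_mul_poissonBracket_eq_zero
    (hid : BracketIdentity W L) (hW : PeriodicSet W) (hL : LatticePeriodic L)
    (hu : CellTestFun W y₀ u) (hψ : CellTestFun W x₀ ψ) (hφ : CellTestFun W x₀ φ)
    (hdisj : Disjoint (tsupport φ) (tsupport u + integerLattice)) :
    ∫ x, (u ⋆[ContinuousLinearMap.mul ℝ ℂ] fun z => (L z : ℂ)) x * poissonBracket ψ φ x = 0 := by
  have hφ_eq {x : Pt} (hx : x ∈ Metric.ball x₀ (1 / 2)) :=
    periodization_eventuallyEq hφ.tsupport_subset_ball hx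
  have hψ_eq {x : Pt} (hx : x ∈ Metric.ball x₀ (1 / 2)) :=
    periodization_eventuallyEq hψ.tsupport_subset_ball hx
  have hcross {x : Pt} (hx : x ∈ Metric.ball x₀ (1 / 2)) :
      poissonBracket (periodization u) (periodization φ) x = 0 := by
    by_cases hxφ : x ∈ tsupport φ
    · exact poissonBracket_of_notMem_tsupport_left fun hxu =>
        hdisj.notMem_of_mem_left hxφ (tsupport_periodization_subset hu.hasCompactSupport hxu)
    · rw [poissonBracket_congr .rfl (hφ_eq hx), poissonBracket_of_notMem_tsupport_right hxφ]
  have hper (v w : Pt → ℂ) : LatticePeriodic fun x =>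
      conv L v x * poissonBracket (periodization w) (periodization φ) x := fun x m => by
    simp only [latticePeriodic_conv hL v x m, latticePeriodic_poissonBracket
      latticePeriodic_periodization latticePeriodic_periodization x m]
  have hperiodized := hid _ _ _ (hu.testFunSp_periodization hW) (hψ.testFunSp_periodization hW)
    (hφ.testFunSp_periodization hW)
  rw [LatticePeriodic.setIntegral_cube_eq_setIntegral_ball
    (fun x m => congrArg₂ (· + ·) (hper _ ψ x m) (hper _ u x m)) x₀] at hperiodized
  rw [← hperiodized, ← setIntegral_eq_integral_of_forall_compl_eq_zero fun x hx => by
    rw [poissonBracket_of_notMem_tsupport_right (mt (hφ.tsupport_subset_ball ·) hx), mul_zero]]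
  refine setIntegral_congr_fun measurableSet_ball fun x hx => ?_
  simp only [hcross hx, mul_zero, add_zero, hu.conv_periodization hL,
    poissonBracket_congr (hψ_eq hx) (hφ_eq hx)]

end PoissonBracket

section LocalConstancy

lemma exists_cellTestFun_eqOn_ball {W : Set Pt} {c : Pt} {r R : ℝ} (hr : 0 < r) (hrR : r < R)
    (hR : R ≤ 1 / 2) (hball : Metric.ball c R ⊆ W) {f : Pt → ℂ} (hf : ContDiff ℝ (⊤ : ℕ∞) f) :
    ∃ ψ, CellTestFun W c ψ ∧ EqOn ψ f (Metric.ball c r) := by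
  obtain ⟨s, hrs, hsR⟩ := exists_between hrR
  let χ : ContDiffBump c := ⟨r, s, hr, hrs⟩
  have hsupp : tsupport (fun x => χ x • f x) ⊆ Metric.ball c R :=
    (tsupport_smul_subset_left _ _).trans
      (χ.tsupport_eq.trans_subset (Metric.closedBall_subset_ball hsR))
  refine ⟨fun x => χ x • f x, ⟨χ.contDiff.smul hf, hsupp.trans hball,
    hsupp.trans (Metric.ball_subset_ball hR)⟩, fun x hx => ?_⟩
  simp only [χ.one_of_mem_closedBall (Metric.ball_subset_closedBall hx), one_smul]

/-- The linear form `x ↦ e₂x₁ - e₁x₂`, whose rotated gradient `∇^⊥ = (-∂₂, ∂₁)` is the constant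
vector `e`. -/
noncomputable def perpForm (e : Pt) : Pt →L[ℝ] ℂ :=
  Complex.ofRealCLM ∘L
    (e.2 • ContinuousLinearMap.fst ℝ ℝ ℝ - e.1 • ContinuousLinearMap.snd ℝ ℝ ℝ)

lemma poissonBracket_ofReal_comp_eq_fderiv_apply {φ : Pt → ℝ} (hφ : Differentiable ℝ φ)
    {ψ : Pt → ℂ} {e : Pt} (hψ : ∀ x ∈ tsupport φ, ψ =ᶠ[𝓝 x] perpForm e) (x : Pt) :
    poissonBracket ψ (Complex.ofReal ∘ φ) x = (fderiv ℝ φ x e : ℂ) := by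
  by_cases hx : x ∈ tsupport φ
  · have hdφ : HasFDerivAt (Complex.ofReal ∘ φ) (Complex.ofRealCLM ∘L fderiv ℝ φ x) x :=
      Complex.ofRealCLM.hasFDerivAt.comp x (hφ x).hasFDerivAt
    have he : e = e.1 • ((1, 0) : Pt) + e.2 • ((0, 1) : Pt) := by ext <;> simp
    conv_rhs => rw [he, map_add, map_smul, map_smul]
    simp only [poissonBracket, pd1, pd2, (hψ x hx).fderiv_eq, ContinuousLinearMap.fderiv,
      hdφ.fderiv]
    simp [perpForm]
  · rw [poissonBracket_of_notMem_tsupport_right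
      (mt (tsupport_comp_subset Complex.ofReal_zero φ ·) hx), fderiv_of_notMem_tsupport ℝ hx]
    simp

namespace BracketIdentity

variable {W : Set Pt} {L : Pt → ℝ} {x₀ y₀ : Pt}

lemma convolution_eq_of_mem_ball (hid : BracketIdentity W L) (hW : PeriodicSet W)
    (hL : LatticePeriodic L) (hLint : LocallyIntegrable L) {r R : ℝ} (hr : 0 < r) (hrR : r < R)
    (hR : R ≤ 1 / 2) (hball : Metric.ball x₀ R ⊆ W) {u : Pt → ℂ} (hu : CellTestFun W y₀ u)
    (hdisj : Disjoint (Metric.ball x₀ r) (tsupport u + integerLattice))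
    {x x' : Pt} (hx : x ∈ Metric.ball x₀ r) (hx' : x' ∈ Metric.ball x₀ r) :
    (u ⋆[ContinuousLinearMap.mul ℝ ℂ] fun z => (L z : ℂ)) x =
      (u ⋆[ContinuousLinearMap.mul ℝ ℂ] fun z => (L z : ℂ)) x' := by
  have hLint' : LocallyIntegrable fun z => (L z : ℂ) := fun z =>
    (hLint z).imp fun _ hs => ⟨hs.1, hs.2.ofReal⟩
  have hsmooth : ContDiff ℝ 1 (u ⋆[ContinuousLinearMap.mul ℝ ℂ] fun z => (L z : ℂ)) :=
    hu.hasCompactSupport.contDiff_convolution_left _ (n := 1)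
      (hu.contDiff.of_le (mod_cast le_top)) hLint'
  refine eq_of_integral_fderiv_smul_eq_zero (μ := volume) Metric.isOpen_ball
    Metric.isPreconnected_ball hsmooth (fun φ hφ _ hφr e => ?_) hx hx'
  obtain ⟨ψ, hψ, hψ_eq⟩ := exists_cellTestFun_eqOn_ball hr hrR hR hball
    (perpForm e).contDiff
  have hsupp : tsupport (Complex.ofReal ∘ φ) ⊆ Metric.ball x₀ r :=
    (tsupport_comp_subset Complex.ofReal_zero φ).trans hφr
  have hφ' : CellTestFun W x₀ (Complex.ofReal ∘ φ) :=
    ⟨Complex.ofRealCLM.contDiff.comp hφ, hsupp.trans ((Metric.ball_subset_ball hrR.le).trans hball),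
      hsupp.trans (Metric.ball_subset_ball (hrR.le.trans hR))⟩
  have hbracket := hid.integral_convolution_mul_poissonBracket_eq_zero hW hL hu hψ hφ'
    (hdisj.mono_left hsupp)
  simp only [poissonBracket_ofReal_comp_eq_fderiv_apply (hφ.differentiable (by simp)) fun z hz =>
    hψ_eq.eventuallyEq_of_mem (Metric.isOpen_ball.mem_nhds (hφr hz))] at hbracket
  simpa only [Complex.real_smul, mul_comm] using hbracket

lemma normed_convolution_eq_of_mem_ball (hid : BracketIdentity W L) (hW : PeriodicSet W)
    (hL : LatticePeriodic L) (hLint : LocallyIntegrable L) {r : ℝ} (hr : 2 * r ≤ 1 / 2)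
    (hx₀ : Metric.ball x₀ (2 * r) ⊆ W) (hy₀ : Metric.ball y₀ (2 * r) ⊆ W)
    (hdisj : Disjoint (Metric.ball (x₀ - y₀) (2 * r)) integerLattice)
    {ρ : ContDiffBump (0 : Pt)} (hρ : ρ.rOut < r)
    {p q : Pt} (hp : p ∈ Metric.ball (x₀ - y₀) r) (hq : q ∈ Metric.ball (x₀ - y₀) r) :
    (ρ.normed volume ⋆[ContinuousLinearMap.lsmul ℝ ℝ] L) p =
      (ρ.normed volume ⋆[ContinuousLinearMap.lsmul ℝ ℝ] L) q := by
  have hr_pos : 0 < r := ρ.rOut_pos.trans hρ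
  let u : Pt → ℂ := fun y => (ρ.normed volume (y - y₀) : ℂ)
  have hsupp : tsupport u ⊆ Metric.ball y₀ r := by
    refine (closure_minimal (fun y hy => ?_) Metric.isClosed_closedBall).trans
      (Metric.closedBall_subset_ball hρ)
    have hy' : y - y₀ ∈ Function.support (ρ.normed volume) := fun h => hy (by simp [u, h])
    rw [ρ.support_normed_eq, mem_ball_zero_iff] at hy'
    exact (mem_closedBall_iff_norm.2 hy'.le)
  have hu : CellTestFun W y₀ u :=
    ⟨Complex.ofRealCLM.contDiff.comp (ρ.contDiff_normed.comp (contDiff_id.sub contDiff_const)),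
      hsupp.trans ((Metric.ball_subset_ball (by linarith)).trans hy₀),
      hsupp.trans (Metric.ball_subset_ball (by linarith))⟩
  have hdisj_u : Disjoint (Metric.ball x₀ r) (tsupport u + integerLattice) := by
    rw [Set.disjoint_left] at hdisj ⊢
    rintro _ hz ⟨t, ht, l, hl, rfl⟩
    refine hdisj ?_ hl
    calc dist l (x₀ - y₀) = dist (t + l - t) (x₀ - y₀) := by rw [add_sub_cancel_left]
      _ ≤ dist (t + l) x₀ + dist t y₀ := dist_sub_sub_le _ _ _ _
      _ < r + r := add_lt_add hz (hsupp ht)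
      _ = 2 * r := (two_mul r).symm
  have hmem {z : Pt} (hz : z ∈ Metric.ball (x₀ - y₀) r) : z + y₀ ∈ Metric.ball x₀ r := by
    rwa [Metric.mem_ball, ← dist_sub_right _ _ y₀, add_sub_cancel_right]
  have hconv := hid.convolution_eq_of_mem_ball hW hL hLint hr_pos (by linarith) hr hx₀ hu hdisj_u
    (hmem hp) (hmem hq)
  simpa only [u, ofReal_comp_sub_convolution, add_sub_cancel_right, Complex.ofReal_inj] using hconv

lemma eventually_eq (hid : BracketIdentity W L) (hO : IsOpen W) (hW : PeriodicSet W)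
    (hL : LatticePeriodic L) (hLint : LocallyIntegrable L)
    (hLcont : ∀ z ∉ integerLattice, ContinuousAt L z)
    (hx₀ : x₀ ∈ W) (hy₀ : y₀ ∈ W) (hxy : x₀ - y₀ ∉ integerLattice) :
    ∀ᶠ p in 𝓝 (x₀ - y₀), L p = L (x₀ - y₀) := by
  obtain ⟨δx, hδx, hballx⟩ := Metric.isOpen_iff.1 hO x₀ hx₀
  obtain ⟨δy, hδy, hbally⟩ := Metric.isOpen_iff.1 hO y₀ hy₀
  obtain ⟨δ, hδ, hball⟩ := Metric.isOpen_iff.1 isClosed_integerLattice.isOpen_compl _ hxy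
  obtain ⟨r, hr, hr'⟩ : ∃ r > 0, 2 * r ≤ min (min δx δy) (min δ (1 / 2)) :=
    ⟨min (min δx δy) (min δ (1 / 2)) / 2, by positivity, by linarith⟩
  simp only [le_min_iff] at hr'
  obtain ⟨⟨hrx, hry⟩, hrδ, hr_half⟩ := hr'
  have hdisj : Disjoint (Metric.ball (x₀ - y₀) (2 * r)) integerLattice :=
    subset_compl_iff_disjoint_right.1 ((Metric.ball_subset_ball hrδ).trans hball)
  have hcont {z : Pt} (hz : z ∈ Metric.ball (x₀ - y₀) r) : ContinuousAt L z :=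
    hLcont z (hdisj.notMem_of_mem_left (Metric.ball_subset_ball (by linarith) hz))
  have hcenter := Metric.mem_ball_self (x := x₀ - y₀) hr
  filter_upwards [Metric.ball_mem_nhds _ hr] with p hp
  exact eq_of_normed_convolution_eq hLint.aestronglyMeasurable (hcont hp) (hcont hcenter) hr
    fun ρ hρ => hid.normed_convolution_eq_of_mem_ball hW hL hLint hr_half
      ((Metric.ball_subset_ball hrx).trans hballx) ((Metric.ball_subset_ball hry).trans hbally)
      hdisj hρ hp hcenter

end BracketIdentity

end LocalConstancy

section Drift

variable {W : Set Pt} {g : Pt → ℂ} {K L : Pt → ℝ}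

lemma conv_eventually_eq (hO : IsOpen W)
    (hL : ∀ x ∈ W, ∀ y ∈ W, x - y ∉ integerLattice → HasFDerivAt (𝕜 := ℝ) L 0 (x - y))
    (hg : TestFunSp W g) {x : Pt} (hx : x ∈ W) :
    ∀ᶠ x' in 𝓝 x, conv L g x' = conv L g x := by
  obtain ⟨F, -, hFW, hF⟩ := hg.supp
  obtain ⟨r, hr, hball⟩ := Metric.isOpen_iff.1 hO x hx
  have hae (z : Pt) : ∀ᵐ y : Pt, z - y ∉ integerLattice :=
    (countable_integerLattice.preimage sub_right_injective).ae_notMem volume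
  have hmem {y z : Pt} : z - y ∈ Metric.ball (x - y) r ↔ z ∈ Metric.ball x r := by
    rw [Metric.mem_ball, dist_sub_right, Metric.mem_ball]
  filter_upwards [Metric.ball_mem_nhds x hr] with x' hx'
  refine setIntegral_congr_ae (measurableSet_Ioc.prod measurableSet_Ioc) ?_
  filter_upwards [hae x, hae x'] with y hy hy' _
  by_cases hyF : y ∈ F
  · have hderiv (z : Pt) (hz : z ∈ Metric.ball (x - y) r \ integerLattice) :
        HasFDerivAt (𝕜 := ℝ) L 0 z := by
      rw [← add_sub_cancel_right z y] at hz ⊢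
      exact hL _ (hball (hmem.1 hz.1)) y (hFW hyF) hz.2
    have hLeq : L (x' - y) = L (x - y) := eq_of_hasFDerivAt_zero_ball_diff_countable
      (by simp [← Module.finrank_eq_rank]) isClosed_integerLattice countable_integerLattice hderiv
      ⟨hmem.2 hx', hy'⟩ ⟨Metric.mem_ball_self hr, hy⟩
    exact congrArg (fun t : ℝ => (t : ℂ) * g y) hLeq
  · simp only [hF y hyF, mul_zero]

lemma integrableOn_conv_integrand (hK : LocallyIntegrable K) (hg : Continuous g) (x : Pt) :
    IntegrableOn (fun y => (K (x - y) : ℂ) * g y) cube := by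
  have hKx : LocallyIntegrable fun y => K (x - y) :=
    (locallyIntegrable_map_homeomorph (Homeomorph.subLeft x)).1
      ((Measure.measurePreserving_sub_left volume x).map_eq.symm ▸ hK)
  have hsub : cube ⊆ Icc (0 : Pt) 1 := fun y hy => ⟨⟨hy.1.1.le, hy.2.1.le⟩, hy.1.2, hy.2.2⟩
  have hint : IntegrableOn (fun y => (K (x - y) : ℂ)) (Icc 0 1) :=
    (hKx.integrableOn_isCompact isCompact_Icc).ofReal
  exact (hint.mul_continuousOn hg.continuousOn isCompact_Icc).mono_set hsub

lemma conv_sub {K₁ K₂ : Pt → ℝ} (hK₁ : LocallyIntegrable K₁) (hK₂ : LocallyIntegrable K₂)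
    (hg : Continuous g) (x : Pt) :
    conv (fun z => K₁ z - K₂ z) g x = conv K₁ g x - conv K₂ g x := by
  simp only [conv, Complex.ofReal_sub, sub_mul]
  exact integral_sub (integrableOn_conv_integrand hK₁ hg x) (integrableOn_conv_integrand hK₂ hg x)

end Drift

section KernelDetermination

variable {W : Set Pt} {K₁ K₂ : Pt → ℝ}

theorem kernel_determination_general (hO : IsOpen W) (hW : PeriodicSet W)
    (hK₁ : LatticePeriodic K₁) (hK₂ : LatticePeriodic K₂)
    (hK₁int : IntegrableOn K₁ cube) (hK₂int : IntegrableOn K₂ cube)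
    (hcont : ∀ z ∉ integerLattice, ContinuousAt (fun z => K₁ z - K₂ z) z)
    (hid : BracketIdentity W fun z => K₁ z - K₂ z) :
    (∀ x ∈ W, ∀ y ∈ W, x - y ∉ integerLattice →
      HasFDerivAt (𝕜 := ℝ) (fun z => K₁ z - K₂ z) 0 (x - y)) ∧
    ∀ g, TestFunSp W g → ∀ x ∈ W, drift K₁ g x = drift K₂ g x := by
  have hK₁loc := hK₁.locallyIntegrable hK₁int
  have hK₂loc := hK₂.locallyIntegrable hK₂int
  have hper : LatticePeriodic fun z => K₁ z - K₂ z := fun z m => by simp only [hK₁ z m, hK₂ z m]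
  have hderiv (x) (hx : x ∈ W) (y) (hy : y ∈ W) (hxy : x - y ∉ integerLattice) :
      HasFDerivAt (𝕜 := ℝ) (fun z => K₁ z - K₂ z) 0 (x - y) :=
    (hasFDerivAt_const _ _).congr_of_eventuallyEq
      (hid.eventually_eq hO hW hper (hK₁loc.sub hK₂loc) hcont hx hy hxy)
  refine ⟨hderiv, fun g hg x hx => ?_⟩
  have hconv : conv K₁ g =ᶠ[𝓝 x] fun x' =>
      conv (fun z => K₁ z - K₂ z) g x + conv K₂ g x' := by
    filter_upwards [conv_eventually_eq hO hderiv hg hx] with x' hx'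
    rw [← hx', conv_sub hK₁loc hK₂loc hg.smooth.continuous, sub_add_cancel]
  simp only [drift, pd1, pd2, hconv.fderiv_eq, fderiv_const_add]

end KernelDetermination

/-- determination of the kernel difference from the integral identity.
If the bilinear integral identity holds for all test functions supported in `W^e`, then
`∇(K₁-K₂)` vanishes on differences of points of `W^e`, and hence `ℛ₁g = ℛ₂g` on `W^e`
for all `g ∈ C_c^∞(W^e)`. -/
theorem kernel_determination
    (We : Set Pt) (hO : IsOpen We) (hne : We.Nonempty) (hper : PeriodicSet We)
    (K₁ K₂ : Pt → ℝ)
    (hK₁per : ∀ x : Pt, ∀ m : ℤ × ℤ, K₁ (x.1 + (m.1 : ℝ), x.2 + (m.2 : ℝ)) = K₁ x)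
    (hK₂per : ∀ x : Pt, ∀ m : ℤ × ℤ, K₂ (x.1 + (m.1 : ℝ), x.2 + (m.2 : ℝ)) = K₂ x)
    (hK₁int : IntegrableOn K₁ cube) (hK₂int : IntegrableOn K₂ cube)
    (hK₁sm : ∀ x : Pt, (¬ ∃ m : ℤ × ℤ, x = ((m.1 : ℝ), (m.2 : ℝ))) →
      ContDiffAt ℝ (⊤ : ℕ∞) K₁ x)
    (hK₂sm : ∀ x : Pt, (¬ ∃ m : ℤ × ℤ, x = ((m.1 : ℝ), (m.2 : ℝ))) →
      ContDiffAt ℝ (⊤ : ℕ∞) K₂ x)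
    (hid : ∀ φ₁ φ₂ φ : Pt → ℂ, TestFunSp We φ₁ → TestFunSp We φ₂ → TestFunSp We φ →
      (∫ x in cube,
        (conv (fun z => K₁ z - K₂ z) φ₁ x *
            (-(pd2 φ₂ x) * pd1 φ x + pd1 φ₂ x * pd2 φ x) +
          conv (fun z => K₁ z - K₂ z) φ₂ x *
            (-(pd2 φ₁ x) * pd1 φ x + pd1 φ₁ x * pd2 φ x))) = 0) :
    (∀ x ∈ We, ∀ y ∈ We,
      (¬ ∃ m : ℤ × ℤ, x.1 - y.1 = (m.1 : ℝ) ∧ x.2 - y.2 = (m.2 : ℝ)) →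
      fderiv ℝ (fun z => K₁ z - K₂ z) (x.1 - y.1, x.2 - y.2) (1, 0) = 0 ∧
      fderiv ℝ (fun z => K₁ z - K₂ z) (x.1 - y.1, x.2 - y.2) (0, 1) = 0) ∧
    (∀ g : Pt → ℂ, TestFunSp We g → ∀ x ∈ We, drift K₁ g x = drift K₂ g x) := by
  have hlattice {z : Pt} (hz : z ∉ integerLattice) :
      ¬ ∃ m : ℤ × ℤ, z = ((m.1 : ℝ), (m.2 : ℝ)) := fun ⟨m, hm⟩ => hz ⟨m, hm.symm⟩
  obtain ⟨hderiv, hdrift⟩ := kernel_determination_general hO hper hK₁per hK₂per hK₁int hK₂int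
    (fun z hz => ((hK₁sm z (hlattice hz)).sub (hK₂sm z (hlattice hz))).continuousAt) hid
  refine ⟨fun x hx y hy hxy => ?_, hdrift⟩
  have hzero := (hderiv x hx y hy fun ⟨m, hm⟩ =>
    hxy ⟨m, congrArg Prod.fst hm.symm, congrArg Prod.snd hm.symm⟩).fderiv
  exact ⟨DFunLike.congr_fun hzero (1, 0), DFunLike.congr_fun hzero (0, 1)⟩
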